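/- arXiv:0905.1748 — 3 statements merged into one kernel-verified Lean document; each statement's English description precedes it below -/
import Mathlib

section
/- (Sylvester–Franke identity, underlying c₁(Λ^k V) = C(n−1,k−1)·c₁(V) for a rank-n bundle V.) Let K be a field, V a K-vector space of finite dimension n, and k an integer with 1 ≤ k ≤ n. For every linear endomorphism f of V, the determinant of the induced endomorphism Λ^k f of the k-th exterior power Λ^k V equals (det f)^{C(n−1,k−1)}, where C(·,·) is the binomial coefficient. -/
open ExteriorAlgebra

/-- The morphism of exterior algebras induced by a linear map `f` sends the `k`-th exterior
power into the `k`-th exterior power. -/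
theorem ExteriorAlgebra.map_mapsTo_exteriorPower {K V : Type*} [Field K] [AddCommGroup V]
    [Module K V] (k : ℕ) (f : V →ₗ[K] V) :
    ∀ x ∈ ⋀[K]^k V, ExteriorAlgebra.map f x ∈ ⋀[K]^k V := by
  intro x hx
  rw [← ExteriorAlgebra.ιMulti_span_fixedDegree] at hx ⊢
  induction hx using Submodule.span_induction with
  | mem x hx =>
    obtain ⟨v, rfl⟩ := hx
    rw [ExteriorAlgebra.map_apply_ιMulti]
    exact Submodule.subset_span ⟨f ∘ v, rfl⟩
  | zero => simp
  | add x y _ _ hx hy => rw [map_add]; exact Submodule.add_mem _ hx hy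
  | smul c x _ hx => rw [map_smul]; exact Submodule.smul_mem _ c hx

/-- The linear endomorphism `Λ^k f` of the `k`-th exterior power `⋀[K]^k V` functorially
induced by a linear endomorphism `f` of `V`; it is determined by
`Λ^k f (v₁ ∧ ⋯ ∧ v_k) = f v₁ ∧ ⋯ ∧ f v_k`. -/
noncomputable def exteriorPowerMap {K V : Type*} [Field K] [AddCommGroup V] [Module K V]
    (k : ℕ) (f : V →ₗ[K] V) : ⋀[K]^k V →ₗ[K] ⋀[K]^k V :=
  LinearMap.restrict (ExteriorAlgebra.map f).toLinearMap
    (ExteriorAlgebra.map_mapsTo_exteriorPower k f)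

theorem exteriorPowerMap_eq_map {K V : Type*} [Field K] [AddCommGroup V] [Module K V]
    (k : ℕ) (f : V →ₗ[K] V) : exteriorPowerMap k f = exteriorPower.map k f := by
  apply exteriorPower.linearMap_ext
  ext v
  simp only [LinearMap.compAlternatingMap_apply, exteriorPower.map_apply_ιMulti]
  exact ExteriorAlgebra.map_apply_ιMulti f v

/-- A unipotent endomorphism has determinant one. -/
theorem det_eq_one_of_sub_one_sq {K W : Type*} [Field K] [AddCommGroup W] [Module K W]
    [FiniteDimensional K W] (g : Module.End K W) (h : (g - 1) * (g - 1) = 0) :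
    LinearMap.det g = 1 := by
  have hnil : IsNilpotent (1 - g) := ⟨2, by rw [pow_two, ← h]; noncomm_ring⟩
  have h1 := hnil.charpoly_eq_X_pow_finrank
  have h2 := LinearMap.eval_charpoly (1 - g) 1
  rw [h1] at h2
  simpa using h2.symm

/-- The number of `k`-subsets of an `n`-set that contain a given element. -/
theorem card_filter_mem_powersetCard (n k : ℕ) (hk1 : 1 ≤ k) (i : Fin n) :
    (((Finset.univ : Finset (Fin n)).powersetCard k).filter (fun s => i ∈ s)).card =
      (n - 1).choose (k - 1) := by
  have h := Finset.card_filter_add_card_filter_not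
    (s := (Finset.univ : Finset (Fin n)).powersetCard k) (fun s => i ∈ s)
  have h2 : ((Finset.univ : Finset (Fin n)).powersetCard k).filter (fun s => ¬ i ∈ s) =
      (Finset.univ.erase i).powersetCard k := by
    ext s
    simp only [Finset.mem_filter, Finset.mem_powersetCard, Finset.subset_univ, true_and,
      Finset.subset_erase]
    tauto
  rw [h2, Finset.card_powersetCard, Finset.card_powersetCard, Finset.card_erase_of_mem (by simp)]
    at h
  simp only [Finset.card_univ, Fintype.card_fin] at h
  have hn := i.pos
  obtain ⟨m, rfl⟩ : ∃ m, n = m + 1 := ⟨n - 1, by omega⟩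
  obtain ⟨l, rfl⟩ : ∃ l, k = l + 1 := ⟨k - 1, by omega⟩
  rw [Nat.choose_succ_succ] at h
  simp only [Nat.add_sub_cancel] at h ⊢
  simp only [Nat.succ_eq_add_one] at h
  omega

theorem prod_powersetCard_prod {K : Type*} [Field K] (n k : ℕ) (hk1 : 1 ≤ k) (D : Fin n → K) :
    ∏ s : Set.powersetCard (Fin n) k, ∏ p, D (Set.powersetCard.ofFinEmbEquiv.symm s p) =
      (∏ i, D i) ^ (n - 1).choose (k - 1) := by
  have h1 : ∀ s : Set.powersetCard (Fin n) k,
      ∏ p, D (Set.powersetCard.ofFinEmbEquiv.symm s p) = ∏ i ∈ s.val, D i := by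
    intro s
    rw [← Finset.prod_image (s := Finset.univ) (f := D)
      (g := Set.powersetCard.ofFinEmbEquiv.symm s)
      (fun a _ b _ hab => (Set.powersetCard.ofFinEmbEquiv.symm s).injective hab)]
    congr 1
    ext i
    have := Set.powersetCard.mem_range_ofFinEmbEquiv_symm_iff_mem s i
    rw [Set.mem_range] at this
    simp only [Finset.mem_image, Finset.mem_univ, true_and]
    exact this
  simp only [h1]
  have h2 : ∏ s : Set.powersetCard (Fin n) k, ∏ i ∈ s.val, D i =
      ∏ s ∈ (Finset.univ : Finset (Fin n)).powersetCard k, ∏ i ∈ s, D i := by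
    refine (Finset.prod_subtype _ ?_ (fun s : Finset (Fin n) => ∏ i ∈ s, D i)).symm
    intro s
    simp [Finset.mem_powersetCard, Set.powersetCard.mem_iff]
  rw [h2]
  have h3 : ∀ s : Finset (Fin n), ∏ i ∈ s, D i = ∏ i, if i ∈ s then D i else 1 := by
    intro s; simp
  simp only [h3]
  rw [Finset.prod_comm, ← Finset.prod_pow]
  refine Finset.prod_congr rfl fun i _ => ?_
  rw [← Finset.prod_filter, Finset.prod_const, card_filter_mem_powersetCard n k hk1 i,
    if_pos (Finset.mem_univ i)]

theorem det_map_diagonal {K V : Type*} [Field K] [AddCommGroup V] [Module K V]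
    (n k : ℕ) (hk1 : 1 ≤ k) (b : Module.Basis (Fin n) K V) (D : Fin n → K) :
    LinearMap.det (exteriorPower.map k (Matrix.toLin b b (Matrix.diagonal D))) =
      (∏ i, D i) ^ (n - 1).choose (k - 1) := by
  classical
  have hM : exteriorPower.map k (Matrix.toLin b b (Matrix.diagonal D)) =
      Matrix.toLin (b.exteriorPower k) (b.exteriorPower k) (Matrix.diagonal
        (fun s => ∏ p, D (Set.powersetCard.ofFinEmbEquiv.symm s p))) := by
    apply (b.exteriorPower k).ext
    intro s
    rw [Matrix.toLin_self]
    simp only [Matrix.diagonal_apply, ite_smul, zero_smul, Finset.sum_ite_eq', Finset.mem_univ,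
      if_true]
    rw [exteriorPower.basis_apply, exteriorPower.map_apply_ιMulti_family]
    unfold exteriorPower.ιMulti_family
    rw [← AlternatingMap.map_smul_univ]
    congr 1
    ext p
    simp [Matrix.toLin_self, Matrix.diagonal_apply]
  rw [hM, LinearMap.det_toLin, Matrix.det_diagonal, prod_powersetCard_prod n k hk1]

theorem det_map_transvection {K V : Type*} [Field K] [AddCommGroup V] [Module K V]
    (n k : ℕ) (b : Module.Basis (Fin n) K V) (i j : Fin n) (hij : i ≠ j) (c : K) :
    LinearMap.det (exteriorPower.map k (Matrix.toLin b b (Matrix.transvection i j c))) = 1 := by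
  classical
  have : FiniteDimensional K V := b.finiteDimensional_of_finite
  set T := Matrix.toLin b b (Matrix.transvection i j c) with hT
  have hTb : ∀ l, T (b l) = b l + if l = j then c • b i else 0 := by
    intro l
    rw [hT, Matrix.toLin_self]
    simp only [Matrix.transvection, Matrix.add_apply, Matrix.one_apply, add_smul,
      Finset.sum_add_distrib, ite_smul, one_smul, zero_smul, Finset.sum_ite_eq', Finset.mem_univ,
      if_true, Matrix.single_apply]
    congr 1
    by_cases h : l = j
    · subst h; simp
    · simp [h, Ne.symm h]
  have hfix : ∀ l, l ≠ j → T (b l) = b l := by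
    intro l hl; rw [hTb, if_neg hl, add_zero]
  have hTj : T (b j) = b j + c • b i := by rw [hTb, if_pos rfl]
  apply det_eq_one_of_sub_one_sq
  apply (b.exteriorPower k).ext
  intro s
  rw [exteriorPower.basis_apply]
  unfold exteriorPower.ιMulti_family
  set e := Set.powersetCard.ofFinEmbEquiv.symm s with he
  simp only [Module.End.mul_apply, LinearMap.sub_apply, Module.End.one_apply, LinearMap.zero_apply]
  by_cases hj : ∃ p, e p = j
  · obtain ⟨p, hp⟩ := hj
    have h1 : T ∘ b ∘ e = Function.update (b ∘ e) p (b j + c • b i) := by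
      ext q
      by_cases hq : q = p
      · subst hq; simp [hp, hTj]
      · have : e q ≠ j := fun h => hq (e.injective (h.trans hp.symm))
        simp [hq, hfix _ this]
    have h2 : Function.update (b ∘ e) p (b j) = b ∘ e := by
      rw [← hp]; exact Function.update_eq_self p (b ∘ e)
    have h3 : T ∘ Function.update (b ∘ e) p (b i) = Function.update (b ∘ e) p (b i) := by
      ext q
      by_cases hq : q = p
      · subst hq; simp [hfix _ hij]
      · have : e q ≠ j := fun h => hq (e.injective (h.trans hp.symm))
        simp [hq, hfix _ this]
    have h4 : exteriorPower.map k T (exteriorPower.ιMulti K k (b ∘ e)) -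
        exteriorPower.ιMulti K k (b ∘ e) =
        c • exteriorPower.ιMulti K k (Function.update (b ∘ e) p (b i)) := by
      rw [exteriorPower.map_apply_ιMulti, h1, AlternatingMap.map_update_add,
        AlternatingMap.map_update_smul, h2, add_sub_cancel_left]
    rw [h4, map_smul, exteriorPower.map_apply_ιMulti, h3, sub_self]
  · have h1 : T ∘ b ∘ e = b ∘ e := by
      ext q
      exact hfix _ fun h => hj ⟨q, h⟩
    rw [exteriorPower.map_apply_ιMulti, h1]
    simp

/-- **Sylvester–Franke identity.** If `V` is an `n`-dimensional vector space over a field `K`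
and `1 ≤ k ≤ n`, then for every linear endomorphism `f` of `V` the determinant of the induced
endomorphism `Λ^k f` of the `k`-th exterior power equals `(det f) ^ (n-1).choose (k-1)`.
(This underlies `c₁(Λᵏ V) = C(n−1, k−1) · c₁(V)` for a rank-`n` bundle `V`.) -/
theorem det_exteriorPowerMap {K V : Type*} [Field K] [AddCommGroup V] [Module K V]
    [FiniteDimensional K V] (n : ℕ) (hn : Module.finrank K V = n)
    (k : ℕ) (hk1 : 1 ≤ k) (hkn : k ≤ n) (f : V →ₗ[K] V) :
    LinearMap.det (exteriorPowerMap k f) =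
      (LinearMap.det f) ^ Nat.choose (n - 1) (k - 1) := by
  classical
  rw [exteriorPowerMap_eq_map]
  let b := Module.finBasisOfFinrankEq K V hn
  have key : ∀ M : Matrix (Fin n) (Fin n) K,
      LinearMap.det (exteriorPower.map k (Matrix.toLin b b M)) =
        M.det ^ Nat.choose (n - 1) (k - 1) := by
    intro M
    refine Matrix.diagonal_transvection_induction (fun M =>
      LinearMap.det (exteriorPower.map k (Matrix.toLin b b M)) =
        M.det ^ Nat.choose (n - 1) (k - 1)) M ?_ ?_ ?_
    · intro D _
      rw [det_map_diagonal n k hk1, Matrix.det_diagonal]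
    · intro t
      rw [Matrix.TransvectionStruct.det, one_pow]
      exact det_map_transvection n k b t.i t.j t.hij t.c
    · intro A B hA hB
      rw [Matrix.toLin_mul b b b, exteriorPower.map_comp, LinearMap.det_comp, hA, hB,
        Matrix.det_mul, mul_pow]
  have h := key (LinearMap.toMatrix b b f)
  rwa [Matrix.toLin_toMatrix, LinearMap.det_toMatrix] at h
end

section
/- For the degree-(2,4) complete intersection Calabi–Yau in ℙ¹×ℙ³, with nonzero triple intersection numbers d₁₂₂ = 4 and d₂₂₂ = 2, the image of the open positive quadrant {(t¹,t²) ∈ ℝ² : t¹ > 0, t² > 0} under the dual Kähler moduli map s(t¹,t²) = (4(t²)², 8t¹t² + 2(t²)²) is exactly the set {(s₁,s₂) ∈ ℝ² : s₁ > 0 and 2s₂ > s₁}, i.e. the portion of the positive quadrant above the line s₂/s₁ = 1/2. -/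
/-- For the degree-(2,4) complete intersection Calabi–Yau in ℙ¹×ℙ³ (with nonzero triple
intersection numbers `d₁₂₂ = 4`, `d₂₂₂ = 2`), the image of the open positive quadrant of
Kähler moduli `(t¹, t²)` under the dual Kähler moduli map
`s(t¹,t²) = (4 (t²)², 8 t¹ t² + 2 (t²)²)` is exactly the part of the positive quadrant
above the line `s₂/s₁ = 1/2`, i.e. `{(s₁,s₂) | 0 < s₁ ∧ s₁ < 2 s₂}`. -/
theorem dual_kaehler_cone_CY_2_4 :
    (fun t : ℝ × ℝ => (4 * t.2 ^ 2, 8 * t.1 * t.2 + 2 * t.2 ^ 2)) ''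
        {t : ℝ × ℝ | 0 < t.1 ∧ 0 < t.2} =
      {s : ℝ × ℝ | 0 < s.1 ∧ s.1 < 2 * s.2} := by
  ext ⟨a, b⟩
  simp only [Set.mem_image, Set.mem_setOf_eq, Prod.exists, Prod.mk.injEq]
  constructor
  · rintro ⟨x, y, ⟨hx, hy⟩, rfl, rfl⟩
    have hxy : 0 < x * y := mul_pos hx hy
    exact ⟨by positivity, by linarith⟩
  · rintro ⟨ha, hab⟩
    have hr : 0 < Real.sqrt a := Real.sqrt_pos.mpr ha
    have hsq : Real.sqrt a ^ 2 = a := Real.sq_sqrt ha.le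
    refine ⟨(2 * b - a) / (8 * Real.sqrt a), Real.sqrt a / 2,
      ⟨div_pos (by linarith) (by positivity), by positivity⟩, ?_, ?_⟩
    · linarith [div_pow (Real.sqrt a) 2 2]
    · have h : 8 * ((2 * b - a) / (8 * Real.sqrt a)) * (Real.sqrt a / 2) = (2 * b - a) / 2 := by
        field_simp
      rw [h, div_pow, hsq]
      ring
end

section
/- For the bi-cubic complete intersection Calabi–Yau in ℙ²×ℙ², with nonzero triple intersection numbers d₁₂₂ = 3 and d₁₁₂ = 3, the image of the open positive quadrant {(t¹,t²) ∈ ℝ² : t¹ > 0, t² > 0} under the dual Kähler moduli map s(t¹,t²) = (3t²(2t¹ + t²), 3t¹(2t² + t¹)) is exactly the entire open positive quadrant {(s₁,s₂) ∈ ℝ² : s₁ > 0 and s₂ > 0}. -/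
/-- For the bi-cubic complete intersection Calabi–Yau in ℙ²×ℙ² (with nonzero triple
intersection numbers `d₁₂₂ = 3`, `d₁₁₂ = 3`), the image of the open positive quadrant of
Kähler moduli `(t¹, t²)` under the dual Kähler moduli map
`s(t¹,t²) = (3 t² (2 t¹ + t²), 3 t¹ (2 t² + t¹))` is exactly the entire open positive
quadrant. -/
theorem dual_kaehler_cone_bicubic :
    (fun t : ℝ × ℝ => (3 * t.2 * (2 * t.1 + t.2), 3 * t.1 * (2 * t.2 + t.1))) ''
        {t : ℝ × ℝ | 0 < t.1 ∧ 0 < t.2} =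
      {s : ℝ × ℝ | 0 < s.1 ∧ 0 < s.2} := by
  ext ⟨a, b⟩
  simp only [Set.mem_image, Set.mem_ofPred_eq, Prod.exists, Prod.mk.injEq]
  constructor
  · rintro ⟨x, y, ⟨hx, hy⟩, rfl, rfl⟩
    constructor <;> positivity
  · rintro ⟨ha, hb⟩
    -- the ratio `r = t² / t¹` is the positive root of `b r² + 2 (b - a) r - a = 0`
    obtain ⟨r, hr, hq⟩ : ∃ r : ℝ, 0 < r ∧ b * r ^ 2 + 2 * (b - a) * r - a = 0 := by
      have hab : 0 < a * b := mul_pos ha hb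
      have hD : 0 ≤ (a - b) ^ 2 + a * b := by positivity
      have hs := Real.sq_sqrt hD
      have hlt : b - a < Real.sqrt ((a - b) ^ 2 + a * b) := by
        apply Real.lt_sqrt_of_sq_lt
        nlinarith
      generalize Real.sqrt ((a - b) ^ 2 + a * b) = w at hs hlt
      refine ⟨((a - b) + w) / b, div_pos (by linarith) hb, ?_⟩
      field_simp
      nlinarith
    have hp : 0 < b / (3 * (2 * r + 1)) := by positivity
    have hx := Real.sq_sqrt hp.le
    have hx0 := Real.sqrt_pos.mpr hp
    set x := Real.sqrt (b / (3 * (2 * r + 1))) with hxdef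
    have hr1 : (2 * r + 1) ≠ 0 := by positivity
    refine ⟨x, r * x, ⟨hx0, by positivity⟩, ?_, ?_⟩
    · have h : 3 * (r * x) * (2 * x + r * x) = 3 * r * (2 + r) * x ^ 2 := by ring
      rw [h, hx]
      field_simp
      linarith
    · have h : 3 * x * (2 * (r * x) + x) = 3 * (2 * r + 1) * x ^ 2 := by ring
      rw [h, hx]
      field_simp
end
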